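/- arXiv:1902.05017 — 2 statements merged into one kernel-verified Lean document; each statement's English description precedes it below -/
import Mathlib

section
/- Let X be a measurable space, C a countable concept class of measurable functions X → {0,1} with VC dimension at most d, c ∈ C a fixed target concept, D a probability measure on X, and α, β ∈ (0,1). If n ≥ (64/α)·(d·ln(64/α) + ln(8/β)), then for a sample x₁,…,x_n drawn i.i.d. from D, the probability that there exists h ∈ C with error_D(c,h) > α and error_S(h) ≤ α/2 (where S = ((x_i, c(x_i)))_{i=1}^n) is at most β. -/
open MeasureTheory

/-- A concept class `C` shatters a finite set `A` if every Boolean labeling of `A`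
is realized by some concept in `C`. -/
def Shatters {X : Type*} (C : Set (X → Bool)) (A : Finset X) : Prop :=
  ∀ f : X → Bool, ∃ c ∈ C, ∀ x ∈ A, c x = f x


lemma aux_binom (m d : ℕ) (y : ℝ) (hy : 0 < y) (hy1 : y ≤ 1) :
    ((∑ k ∈ Finset.Iic d, m.choose k : ℕ) : ℝ) ≤ (1 / y) ^ d * Real.exp (y * m) := by
  have h1 : ((∑ k ∈ Finset.Iic d, m.choose k : ℕ) : ℝ) * y ^ d ≤ (1 + y) ^ m := by
    push_cast
    rw [Finset.sum_mul, add_comm, add_pow]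
    have e1 : ∀ k ∈ Finset.Iic d, (m.choose k : ℝ) * y ^ d ≤ y ^ k * (m.choose k : ℝ) := by
      intro k hk
      rw [mul_comm]
      exact mul_le_mul_of_nonneg_right
        (pow_le_pow_of_le_one hy.le hy1 (Finset.mem_Iic.1 hk)) (by positivity)
    refine (Finset.sum_le_sum e1).trans ?_
    simp only [one_pow, mul_one]
    have e2 : ∑ k ∈ Finset.range (m + 1), y ^ k * (m.choose k : ℝ)
        = ∑ k ∈ Finset.range (m + 1) ∪ Finset.Iic d, y ^ k * (m.choose k : ℝ) := by
      apply Finset.sum_subset Finset.subset_union_left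
      intro k _ hk
      rw [Nat.choose_eq_zero_of_lt (by simpa using hk)]
      simp
    rw [e2]
    exact Finset.sum_le_sum_of_subset_of_nonneg Finset.subset_union_right
      (fun _ _ _ => by positivity)
  have h2 : (1 + y) ^ m ≤ Real.exp (y * m) := by
    rw [mul_comm, Real.exp_nat_mul]
    exact pow_le_pow_left₀ (by positivity) (by linarith [Real.add_one_le_exp y]) m
  rw [one_div, inv_pow, inv_mul_eq_div, le_div_iff₀ (by positivity)]
  exact h1.trans h2

lemma aux_e1 : Real.exp (22 / 100) ≤ 5 / 4 := by
  have h : Real.exp (22 / 100) ^ 50 ≤ (5 / 4 : ℝ) ^ 50 := by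
    rw [← Real.exp_nat_mul]
    have : ((50 : ℕ) : ℝ) * (22 / 100) = (11 : ℕ) * 1 := by norm_num
    rw [this, Real.exp_nat_mul]
    refine (pow_le_pow_left₀ (Real.exp_pos _).le Real.exp_one_lt_d9.le 11).trans ?_
    norm_num
  exact le_of_pow_le_pow_left₀ (by norm_num) (by norm_num) h

lemma aux_e2 : Real.exp (-(29 / 100)) ≤ 3 / 4 := by
  have h : (4 / 3 : ℝ) ^ 100 ≤ Real.exp (29 / 100) ^ 100 := by
    rw [← Real.exp_nat_mul]
    have : ((100 : ℕ) : ℝ) * (29 / 100) = (29 : ℕ) * 1 := by norm_num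
    rw [this, Real.exp_nat_mul]
    refine le_trans ?_ (pow_le_pow_left₀ (by norm_num) Real.exp_one_gt_d9.le 29)
    norm_num
  have h' := le_of_pow_le_pow_left₀ (by norm_num) (Real.exp_pos _).le h
  rw [Real.exp_neg]
  exact (inv_anti₀ (by norm_num) h').trans (by norm_num)

/-- count of `σ` which are bad for a trace `a` -/
lemma aux_swap (n : ℕ) (a : Finset (Fin n × Bool)) (t : ℝ) :
    (((Finset.univ : Finset (Fin n → Bool)).filter fun σ =>
      (((Finset.univ.filter fun i => (i, σ i) ∈ a).card : ℝ) ≤ t / 2 ∧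
       7 / 8 * t ≤ ((Finset.univ.filter fun i => (i, !σ i) ∈ a).card : ℝ))).card : ℝ)
      * Real.exp (3 / 64 * t) ≤ 2 ^ n := by
  let w : Fin n → Bool → ℝ := fun i b =>
    (if (i, b) ∈ a then Real.exp (-(29 / 100)) else 1) *
      (if (i, !b) ∈ a then Real.exp (22 / 100) else 1)
  have hw0 : ∀ i b, 0 ≤ w i b := by
    intro i b; simp only [w]; split_ifs <;> positivity
  have hw : ∀ σ : Fin n → Bool, ∏ i, w i (σ i) =
      Real.exp (-(29 / 100) * ((Finset.univ.filter fun i => (i, σ i) ∈ a).card : ℝ)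
        + 22 / 100 * ((Finset.univ.filter fun i => (i, !σ i) ∈ a).card : ℝ)) := by
    intro σ
    simp only [w]
    rw [Finset.prod_mul_distrib, Finset.prod_ite, Finset.prod_ite, Real.exp_add]
    simp [← Real.exp_nat_mul, mul_comm]
  have hsum : ∑ σ : Fin n → Bool, ∏ i, w i (σ i) ≤ 2 ^ n := by
    rw [← Fintype.prod_sum]
    have : (2 : ℝ) ^ n = ∏ i : Fin n, (2 : ℝ) := by simp
    rw [this]
    refine Finset.prod_le_prod (fun i _ => Finset.sum_nonneg fun b _ => hw0 i b) (fun i _ => ?_)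
    have e1 := aux_e1
    have e2 := aux_e2
    have p1 := Real.exp_pos (22 / 100)
    have p2 := Real.exp_pos (-(29 / 100))
    have e3 : Real.exp (-(29 / 100)) * Real.exp (22 / 100) ≤ 1 := by
      rw [← Real.exp_add]; exact Real.exp_le_one_iff.2 (by norm_num)
    simp only [w, Fintype.sum_bool, Bool.not_true, Bool.not_false]
    generalize Real.exp (-(29 / 100)) = p at *
    generalize Real.exp (22 / 100) = q at *
    split_ifs <;> linarith
  refine le_trans ?_ hsum
  clear hsum
  generalize hF : (Finset.univ : Finset (Fin n → Bool)).filter (fun σ =>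
      (((Finset.univ.filter fun i => (i, σ i) ∈ a).card : ℝ) ≤ t / 2 ∧
       7 / 8 * t ≤ ((Finset.univ.filter fun i => (i, !σ i) ∈ a).card : ℝ))) = F
  have hmem : ∀ σ ∈ F, Real.exp (3 / 64 * t) ≤ ∏ i, w i (σ i) := by
    intro σ hσ
    rw [← hF] at hσ
    obtain ⟨h1, h2⟩ := (Finset.mem_filter.1 hσ).2
    rw [hw]
    apply Real.exp_le_exp.2
    have : (0 : ℝ) ≤ ((Finset.univ.filter fun i => (i, σ i) ∈ a).card : ℝ) := by positivity
    by_cases ht : 0 ≤ t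
    · linarith
    · linarith
  have h3 : (F.card : ℝ) * Real.exp (3 / 64 * t) = ∑ σ ∈ F, Real.exp (3 / 64 * t) := by
    rw [Finset.sum_const, nsmul_eq_mul]
  rw [h3]
  exact (Finset.sum_le_sum hmem).trans
    (Finset.sum_le_sum_of_subset_of_nonneg (Finset.subset_univ _)
      (fun σ _ _ => Finset.prod_nonneg fun i _ => hw0 _ _))

lemma aux_sauer {X : Type*} (C : Set (X → Bool)) (d : ℕ)
    (hVC : ∀ A : Finset X, Shatters C A → A.card ≤ d) (c : X → Bool)
    {ι : Type*} [Fintype ι] [DecidableEq ι] (w : ι → X) (A : Finset (Finset ι))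
    (hA : ∀ u ∈ A, ∃ h ∈ C, u = Finset.univ.filter fun i => h (w i) ≠ c (w i)) :
    A.card ≤ ∑ k ∈ Finset.Iic d, (Fintype.card ι).choose k := by
  classical
  have hd : A.vcDim ≤ d := by
    refine Finset.sup_le fun s hs => ?_
    rw [Finset.mem_shatterer] at hs
    have hinj : Set.InjOn w s := by
      intro i hi j hj hij
      by_contra hne
      obtain ⟨u, hu, hsu⟩ := hs (Finset.singleton_subset_iff.2 hi)
      obtain ⟨h, -, rfl⟩ := hA u hu
      have h1 : i ∈ s ∩ Finset.univ.filter fun i => h (w i) ≠ c (w i) := by rw [hsu]; simp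
      have h2 : j ∉ s ∩ Finset.univ.filter fun i => h (w i) ≠ c (w i) := by
        rw [hsu]; simpa using fun h => hne h.symm
      simp only [Finset.mem_inter, Finset.mem_filter, Finset.mem_univ, true_and] at h1 h2
      rw [← hij] at h2
      exact h2 ⟨hj, h1.2⟩
    rw [← Finset.card_image_of_injOn hinj]
    apply hVC
    intro f
    obtain ⟨u, hu, hsu⟩ := hs (Finset.filter_subset (fun i => f (w i) ≠ c (w i)) s)
    obtain ⟨h, hh, rfl⟩ := hA u hu
    refine ⟨h, hh, fun x hx => ?_⟩
    obtain ⟨i, hi, rfl⟩ := Finset.mem_image.1 hx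
    have := congrArg (fun t => i ∈ t) hsu
    simp only [Finset.mem_inter, Finset.mem_filter, Finset.mem_univ, true_and, hi] at this
    revert this
    cases h (w i) <;> cases f (w i) <;> cases c (w i) <;> simp
  refine (Finset.card_le_card_shatterer A).trans (Finset.card_shatterer_le_sum_vcDim.trans ?_)
  exact Finset.sum_le_sum_of_subset (Finset.Iic_subset_Iic.2 hd)

lemma aux_point {X : Type*} (C : Set (X → Bool)) (d : ℕ)
    (hVC : ∀ A : Finset X, Shatters C A → A.card ≤ d) (c : X → Bool) (n : ℕ) (t : ℝ)
    (z : Fin n → X × X) (F : Finset (Fin n → Bool))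
    (hF : ∀ σ ∈ F, ∃ h ∈ C,
      ((Finset.univ.filter fun i => h (if σ i then z i |>.2 else (z i).1) ≠
          c (if σ i then z i |>.2 else (z i).1)).card : ℝ) ≤ t / 2 ∧
      7 / 8 * t ≤ ((Finset.univ.filter fun i => h (if !σ i then z i |>.2 else (z i).1) ≠
          c (if !σ i then z i |>.2 else (z i).1)).card : ℝ)) :
    (F.card : ℝ) * Real.exp (3 / 64 * t) ≤
      ((∑ k ∈ Finset.Iic d, (2 * n).choose k : ℕ) : ℝ) * 2 ^ n := by
  classical
  let w : Fin n × Bool → X := fun p => if p.2 then (z p.1).2 else (z p.1).1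
  let A : Finset (Finset (Fin n × Bool)) := Finset.univ.filter fun u =>
    ∃ h ∈ C, u = Finset.univ.filter fun i => h (w i) ≠ c (w i)
  have hA := aux_sauer C d hVC c w A (fun u hu => (Finset.mem_filter.1 hu).2)
  rw [Fintype.card_prod, Fintype.card_fin, Fintype.card_bool, mul_comm n 2] at hA
  let Q : Finset (Fin n × Bool) → Finset (Fin n → Bool) := fun a =>
    (Finset.univ : Finset (Fin n → Bool)).filter fun σ =>
      (((Finset.univ.filter fun i => (i, σ i) ∈ a).card : ℝ) ≤ t / 2 ∧
       7 / 8 * t ≤ ((Finset.univ.filter fun i => (i, !σ i) ∈ a).card : ℝ))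
  have hQ : ∀ a, ((Q a).card : ℝ) * Real.exp (3 / 64 * t) ≤ 2 ^ n := fun a => by
    convert aux_swap n a t
  have hsub : F ⊆ A.biUnion Q := by
    intro σ hσ
    obtain ⟨h, hh, h1, h2⟩ := hF σ hσ
    refine Finset.mem_biUnion.2 ⟨Finset.univ.filter fun i => h (w i) ≠ c (w i),
      Finset.mem_filter.2 ⟨Finset.mem_univ _, h, hh, rfl⟩, ?_⟩
    refine Finset.mem_filter.2 ⟨Finset.mem_univ _, ?_⟩
    simp only [Finset.mem_filter, Finset.mem_univ, true_and, w]
    exact ⟨h1, h2⟩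
  have hcard : (F.card : ℝ) ≤ ∑ a ∈ A, ((Q a).card : ℝ) := by
    exact_mod_cast (Finset.card_le_card hsub).trans Finset.card_biUnion_le
  calc (F.card : ℝ) * Real.exp (3 / 64 * t)
      ≤ (∑ a ∈ A, ((Q a).card : ℝ)) * Real.exp (3 / 64 * t) := by gcongr
    _ = ∑ a ∈ A, ((Q a).card : ℝ) * Real.exp (3 / 64 * t) := Finset.sum_mul _ _ _
    _ ≤ ∑ a ∈ A, (2 : ℝ) ^ n := Finset.sum_le_sum fun a _ => hQ a
    _ = (A.card : ℝ) * 2 ^ n := by rw [Finset.sum_const, nsmul_eq_mul]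
    _ ≤ _ := by gcongr

/-- swap the pairs selected by `σ` -/
def auxSwap {X : Type*} {n : ℕ} (σ : Fin n → Bool) (z : Fin n → X × X) : Fin n → X × X :=
  fun i => (if σ i then Prod.swap else id) (z i)

lemma auxSwap_mp {X : Type*} [MeasurableSpace X] (D : Measure X) [IsProbabilityMeasure D]
    {n : ℕ} (σ : Fin n → Bool) :
    MeasurePreserving (auxSwap σ) (Measure.pi fun _ : Fin n => D.prod D)
      (Measure.pi fun _ : Fin n => D.prod D) := by
  unfold auxSwap
  apply measurePreserving_pi (fun _ : Fin n => D.prod D) (fun _ : Fin n => D.prod D)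
  intro i
  by_cases h : σ i
  · simp only [h, if_true]; exact Measure.measurePreserving_swap
  · simp only [h]; exact MeasurePreserving.id _

lemma aux_sym {X : Type*} [MeasurableSpace X] (D : Measure X) [IsProbabilityMeasure D]
    (n : ℕ) (B : Set (Fin n → X × X)) (hB : MeasurableSet B) (K : ℝ)
    (hK : ∀ z, ∀ F : Finset (Fin n → Bool), (∀ σ ∈ F, auxSwap σ z ∈ B) →
      (F.card : ℝ) ≤ K * 2 ^ n) :
    (Measure.pi fun _ : Fin n => D.prod D) B ≤ ENNReal.ofReal K := by
  classical
  set ν := Measure.pi fun _ : Fin n => D.prod D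
  have hK0 : 0 ≤ K * 2 ^ n := by
    have z : Nonempty (Fin n → X × X) := by
      have := D.nonempty_of_neZero
      infer_instance
    obtain ⟨z⟩ := z
    simpa using hK z ∅ (by simp)
  have h1 : (2 : ENNReal) ^ n * ν B = ∑ σ : Fin n → Bool, ν (auxSwap σ ⁻¹' B) := by
    have : ∀ σ : Fin n → Bool, ν (auxSwap σ ⁻¹' B) = ν B := fun σ =>
      (auxSwap_mp D σ).measure_preimage hB.nullMeasurableSet
    simp [this]
  have h2 : ∑ σ : Fin n → Bool, ν (auxSwap σ ⁻¹' B)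
      = ∫⁻ z, ∑ σ : Fin n → Bool, (auxSwap σ ⁻¹' B).indicator 1 z ∂ν := by
    rw [lintegral_finsetSum]
    · exact Finset.sum_congr rfl fun σ _ =>
        (lintegral_indicator_one ((auxSwap_mp D σ).measurable hB)).symm
    · exact fun σ _ => measurable_one.indicator ((auxSwap_mp D σ).measurable hB)
  have h3 : ∫⁻ z, ∑ σ : Fin n → Bool, (auxSwap σ ⁻¹' B).indicator 1 z ∂ν
      ≤ ∫⁻ z, ENNReal.ofReal (K * 2 ^ n) ∂ν := by
    refine lintegral_mono fun z => ?_
    have e : ∑ σ : Fin n → Bool, (auxSwap σ ⁻¹' B).indicator (1 : (Fin n → X × X) → ENNReal) z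
        = ((Finset.univ.filter fun σ : Fin n → Bool => auxSwap σ z ∈ B).card : ENNReal) := by
      simp [Set.indicator_apply]
    simp only [e]
    have := hK z (Finset.univ.filter fun σ : Fin n → Bool => auxSwap σ z ∈ B)
      (fun σ hσ => (Finset.mem_filter.1 hσ).2)
    rw [← ENNReal.ofReal_natCast]
    exact ENNReal.ofReal_le_ofReal this
  have h4 : (2 : ENNReal) ^ n * ν B ≤ 2 ^ n * ENNReal.ofReal K := by
    rw [h1, h2]
    refine h3.trans ?_
    rw [lintegral_const, measure_univ, mul_one, mul_comm, ENNReal.ofReal_mul (by positivity),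
      ENNReal.ofReal_pow (by norm_num)]
    simp
  exact (ENNReal.mul_le_mul_iff_right (by positivity) (by finiteness)).1 h4

lemma aux_chernoff {X : Type*} [MeasurableSpace X] (D : Measure X) [IsProbabilityMeasure D]
    (n : ℕ) (E : Set X) [DecidablePred (· ∈ E)] (hE : MeasurableSet E) (α : ℝ)
    (hα0 : 0 < α) (hα : α < D.real E) (hn : 192 * Real.log 2 ≤ n * α) :
    ENNReal.ofReal (1 / 2) ≤ (Measure.pi fun _ : Fin n => D)
      {y | 7 / 8 * (n * α) ≤ ((Finset.univ.filter fun i => y i ∈ E).card : ℝ)} := by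
  set μ := Measure.pi fun _ : Fin n => D
  set p := D.real E
  set s : Set (Fin n → X) :=
    {y | 7 / 8 * (n * α) ≤ ((Finset.univ.filter fun i => y i ∈ E).card : ℝ)} with hs
  let f : X → ℝ := fun x => if x ∈ E then 7 / 8 else 1
  have hfm : Measurable f := Measurable.ite hE measurable_const measurable_const
  have hcount : ∀ y : Fin n → X, ∏ i, f (y i) =
      (7 / 8 : ℝ) ^ (Finset.univ.filter fun i => y i ∈ E).card := by
    intro y; simp only [f]; rw [Finset.prod_ite]; simp [div_pow]
  have hgm : Measurable fun y : Fin n → X => ∏ i, f (y i) := by fun_prop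
  have hsm : MeasurableSet s := by
    have : Measurable fun y : Fin n → X => ((Finset.univ.filter fun i => y i ∈ E).card : ℝ) := by
      have : (fun y : Fin n → X => ((Finset.univ.filter fun i => y i ∈ E).card : ℝ))
          = fun y => ∑ i, (if y i ∈ E then (1 : ℝ) else 0) := by
        ext y; simp
      rw [this]
      refine Finset.measurable_sum _ fun i _ => ?_
      exact Measurable.ite (measurable_pi_apply i hE) measurable_const measurable_const
    exact measurableSet_le measurable_const this
  have hint : ∫ y, ∏ i, f (y i) ∂μ = (1 - p / 8) ^ n := by
    rw [integral_fintype_prod_eq_pow f, Fintype.card_fin]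
    congr 1
    have : f = fun x => 1 - E.indicator (fun _ => (1 / 8 : ℝ)) x := by
      ext x; simp only [f, Set.indicator_apply]; split_ifs <;> norm_num
    rw [this, integral_sub (integrable_const _) ((integrable_const _).indicator hE),
      integral_indicator_const _ hE]
    simp [p]
    ring
  have hfI : Integrable (fun y : Fin n → X => ∏ i, f (y i)) μ := by
    refine Integrable.of_bound hgm.aestronglyMeasurable 1 (ae_of_all _ fun y => ?_)
    rw [hcount, Real.norm_of_nonneg (by positivity)]
    exact pow_le_one₀ (by norm_num) (by norm_num)
  have hmk := mul_meas_ge_le_integral_of_nonneg (μ := μ)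
    (ae_of_all _ fun y => by simp only [Pi.zero_apply]; rw [hcount]; positivity) hfI
    (Real.exp (-(134 / 1000) * (7 / 8 * (n * α))))
  rw [hint] at hmk
  have hsub : sᶜ ⊆ {y | Real.exp (-(134 / 1000) * (7 / 8 * (n * α))) ≤ ∏ i, f (y i)} := by
    intro y hy
    simp only [hs, Set.mem_compl_iff, Set.mem_ofPred_eq, not_le] at hy ⊢
    rw [hcount]
    have e : Real.exp (-(134 / 1000)) ≤ 7 / 8 := by
      have := Real.quadratic_le_exp_of_nonneg (x := 134 / 1000) (by norm_num)
      rw [Real.exp_neg]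
      refine (inv_anti₀ (by norm_num : (0 : ℝ) < 8 / 7) (le_trans ?_ this)).trans ?_ <;> norm_num
    refine le_trans ?_ (pow_le_pow_left₀ (Real.exp_pos _).le e _)
    rw [← Real.exp_nat_mul]
    exact Real.exp_le_exp.2 (by nlinarith)
  have hp1 : p ≤ 1 := measureReal_le_one
  have hpow : (1 - p / 8) ^ n ≤ Real.exp (-(n * α) / 8) := by
    have : (-(n * α) / 8 : ℝ) = n * (-(α / 8)) := by ring
    rw [this, Real.exp_nat_mul]
    refine pow_le_pow_left₀ (by linarith) ?_ n
    linarith [Real.one_sub_le_exp_neg (α / 8)]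
  have hc : μ.real sᶜ ≤ 1 / 2 := by
    have h1 : μ.real sᶜ ≤ μ.real _ := measureReal_mono hsub
    have h2 : Real.exp (-(134 / 1000) * (7 / 8 * (n * α))) * μ.real sᶜ
        ≤ Real.exp (-(n * α) / 8) :=
      (mul_le_mul_of_nonneg_left h1 (Real.exp_pos _).le).trans (hmk.trans hpow)
    have h3 : Real.exp (-(n * α) / 8) ≤
        Real.exp (-(134 / 1000) * (7 / 8 * (n * α))) * (1 / 2) := by
      have : (1 / 2 : ℝ) = Real.exp (-Real.log 2) := by
        rw [Real.exp_neg, Real.exp_log (by norm_num)]; norm_num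
      rw [this, ← Real.exp_add]
      apply Real.exp_le_exp.2
      have := Real.log_pos (x := 2) (by norm_num)
      nlinarith
    exact le_of_mul_le_mul_left (h2.trans h3) (Real.exp_pos _)
  rw [probReal_compl_eq_one_sub hsm] at hc
  rw [← ofReal_measureReal]
  exact ENNReal.ofReal_le_ofReal (by linarith)

/-- VC generalization bound: if `C` is a countable class of measurable concepts with VC
dimension at most `d`, `c ∈ C` is the target, `D` is a probability measure, and
`n ≥ (64/α)(d ln(64/α) + ln(8/β))`, then the probability (over an i.i.d. sample of size `n`
from `D`) that some `h ∈ C` has generalization error `> α` but empirical error `≤ α/2`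
is at most `β`. -/
theorem stmt2 {X : Type*} [MeasurableSpace X] (C : Set (X → Bool)) (hC : C.Countable)
    (hCmeas : ∀ h ∈ C, Measurable h) (d : ℕ)
    (hVC : ∀ A : Finset X, Shatters C A → A.card ≤ d)
    (c : X → Bool) (hc : c ∈ C) (D : Measure X) [IsProbabilityMeasure D]
    (α β : ℝ) (hα : α ∈ Set.Ioo (0 : ℝ) 1) (hβ : β ∈ Set.Ioo (0 : ℝ) 1)
    (n : ℕ) (hn : 64 / α * (d * Real.log (64 / α) + Real.log (8 / β)) ≤ n) :
    Measure.pi (fun _ : Fin n => D)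
        {x | ∃ h ∈ C, α < (D {y | h y ≠ c y}).toReal ∧
          ((Finset.univ.filter fun i => h (x i) ≠ c (x i)).card : ℝ) / n ≤ α / 2}
      ≤ ENNReal.ofReal β := by
  classical
  obtain ⟨hα0, hα1⟩ := hα
  obtain ⟨hβ0, hβ1⟩ := hβ
  set t : ℝ := n * α with ht
  have hL : 0 ≤ Real.log (64 / α) :=
    Real.log_nonneg (by rw [le_div_iff₀ hα0]; linarith)
  have hnt : 64 * (d * Real.log (64 / α) + Real.log (8 / β)) ≤ t := by
    have := mul_le_mul_of_nonneg_right hn hα0.le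
    calc _ = 64 / α * (d * Real.log (64 / α) + Real.log (8 / β)) * α := by field_simp
      _ ≤ _ := this
  have hB8 : 3 * Real.log 2 ≤ Real.log (8 / β) := by
    have : 3 * Real.log 2 = Real.log 8 := by
      rw [show (8 : ℝ) = 2 ^ 3 by norm_num, Real.log_pow]; norm_num
    rw [this]
    apply Real.log_le_log (by norm_num)
    rw [le_div_iff₀ hβ0]; linarith
  have hdL : 0 ≤ d * Real.log (64 / α) := by positivity
  have ht192 : 192 * Real.log 2 ≤ n * α := by linarith
  have hl2 := Real.log_pos (x := 2) (by norm_num)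
  have ht0 : 0 < t := by linarith
  have hn0 : (0 : ℝ) < n := by
    by_contra hneg
    have : (n : ℝ) = 0 := le_antisymm (not_lt.1 hneg) (by positivity)
    rw [ht, this] at ht0
    simp at ht0
  set μ := Measure.pi (fun _ : Fin n => D)
  let cnt : (X → Bool) → (Fin n → X) → ℝ := fun h x =>
    ((Finset.univ.filter fun i => h (x i) ≠ c (x i)).card : ℝ)
  have hEm : ∀ h ∈ C, MeasurableSet {y | h y ≠ c y} := fun h hh =>
    (measurableSet_eq_fun (hCmeas h hh) (hCmeas c hc)).compl
  have hcm : ∀ h ∈ C, Measurable (cnt h) := by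
    intro h hh
    have : cnt h = fun y => ∑ i, (if y i ∈ {y | h y ≠ c y} then (1 : ℝ) else 0) := by
      ext y; simp only [cnt]; rw [Finset.card_filter]; push_cast; rfl
    rw [this]
    refine Finset.measurable_sum _ fun i _ => ?_
    exact Measurable.ite (measurable_pi_apply i (hEm h hh)) measurable_const measurable_const
  let B : Set ((Fin n → X) × (Fin n → X)) :=
    ⋃ h ∈ C, {z | cnt h z.1 ≤ t / 2 ∧ 7 / 8 * t ≤ cnt h z.2}
  have hBm : MeasurableSet B := by
    refine MeasurableSet.biUnion hC fun h hh => ?_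
    exact (measurableSet_le ((hcm h hh).comp measurable_fst) measurable_const).inter
      (measurableSet_le measurable_const ((hcm h hh).comp measurable_snd))
  have hmemB : ∀ z, z ∈ B ↔ ∃ h ∈ C, cnt h z.1 ≤ t / 2 ∧ 7 / 8 * t ≤ cnt h z.2 := by
    intro z; simp only [B, Set.mem_iUnion, exists_prop]; rfl
  -- ghost sample
  have hghost : ENNReal.ofReal (1 / 2) * μ {x | ∃ h ∈ C, α < (D {y | h y ≠ c y}).toReal ∧
          ((Finset.univ.filter fun i => h (x i) ≠ c (x i)).card : ℝ) / n ≤ α / 2}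
      ≤ (μ.prod μ) B := by
    rw [Measure.prod_apply hBm]
    refine le_trans ?_ (mul_meas_ge_le_lintegral (measurable_measure_prodMk_left hBm)
      (ENNReal.ofReal (1 / 2)))
    refine mul_le_mul_right (measure_mono ?_) _
    rintro x ⟨h, hh, h1, h2⟩
    have hch := aux_chernoff D n {y | h y ≠ c y} (hEm h hh) α hα0 h1 ht192
    refine hch.trans (measure_mono fun y hy => ?_)
    refine (hmemB _).2 ⟨h, hh, ?_, hy⟩
    rw [div_le_iff₀ hn0] at h2
    change cnt h x ≤ _ at h2
    change cnt h x ≤ _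
    rw [ht]; linarith
  -- symmetrization
  set K : ℝ := ((∑ k ∈ Finset.Iic d, (2 * n).choose k : ℕ) : ℝ) * Real.exp (-(3 / 64 * t)) with hK
  have hmp := measurePreserving_arrowProdEquivProdArrow X X (Fin n) (fun _ => D) (fun _ => D)
  have hsym : (μ.prod μ) B ≤ ENNReal.ofReal K := by
    rw [← hmp.measure_preimage hBm.nullMeasurableSet]
    refine aux_sym D n _ (hmp.measurable hBm) K fun z F hF => ?_
    have := aux_point C d hVC c n t z F (fun σ hσ => ?_)
    · rw [hK, Real.exp_neg, mul_right_comm, ← div_eq_mul_inv, le_div_iff₀ (Real.exp_pos _)]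
      exact this
    · obtain ⟨h, hh, h1, h2⟩ := (hmemB _).1 (hF σ hσ)
      refine ⟨h, hh, ?_, ?_⟩
      · convert h1 using 6 with i
        all_goals
          change _ = (auxSwap σ z _).1
          unfold auxSwap
          split_ifs <;> rfl
      · convert h2 using 6 with i
        all_goals
          change _ = (auxSwap σ z _).2
          unfold auxSwap
          cases σ _ <;> rfl
  have hKβ : K ≤ β / 8 := by
    have hb := aux_binom (2 * n) d (α / 64) (by positivity) (by linarith)
    have e1 : (1 / (α / 64)) ^ d = Real.exp (d * Real.log (64 / α)) := by
      rw [Real.exp_nat_mul, Real.exp_log (by positivity), one_div_div]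
    have e2 : β / 8 = Real.exp (-Real.log (8 / β)) := by
      rw [Real.exp_neg, Real.exp_log (by positivity), inv_div]
    rw [e1, ← Real.exp_add] at hb
    calc K ≤ _ := mul_le_mul_of_nonneg_right hb (Real.exp_pos _).le
      _ ≤ β / 8 := by
        rw [e2, ← Real.exp_add]
        apply Real.exp_le_exp.2
        push_cast
        have : α / 64 * (2 * n) = t / 32 := by rw [ht]; ring
        rw [this]
        linarith
  have hfin := hghost.trans (hsym.trans (ENNReal.ofReal_le_ofReal hKβ))
  have h12 : ENNReal.ofReal (β / 8) ≤ ENNReal.ofReal (1 / 2) * ENNReal.ofReal β := by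
    rw [← ENNReal.ofReal_mul (by norm_num)]
    exact ENNReal.ofReal_le_ofReal (by linarith)
  exact (ENNReal.mul_le_mul_iff_right (by simp) ENNReal.ofReal_ne_top).1 (hfin.trans h12)
end

section
/- Consider a probability space with a filtration F₀ ⊆ F₁ ⊆ … ⊆ F_n. For each j ∈ {1,…,n}, let p_j be an F_{j−1}-measurable random variable with values in [0,1] (the adversary's heads probability, chosen based on the first j−1 rounds), and let X_j be an F_j-measurable random variable with values in {0,1} satisfying E[X_j | F_{j−1}] = p_j almost surely (the coin toss of round j). Let Z_j = ∏_{i=1}^{j} (1 − X_i) be the indicator that no coin comes up heads in the first j rounds, and let Y = Σ_{j=1}^{n} p_j · Z_j. Then for every y ∈ ℝ, P[Y > y] ≤ exp(−y). -/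
open MeasureTheory

noncomputable def stopMart {Ω : Type*} (p X : ℕ → Ω → ℝ) (y : ℝ) : ℕ → Ω → ℝ
  | 0, _ => 1
  | k + 1, ω => if Real.exp y < stopMart p X y k ω then stopMart p X y k ω
      else stopMart p X y k ω * Real.exp (p (k + 1) ω) * (1 - X (k + 1) ω)

theorem st_invariant {Ω : Type*} (n : ℕ) (p X : ℕ → Ω → ℝ) (y : ℝ) (hy : 0 ≤ y)
    (hX_range : ∀ j ω, 1 ≤ j → j ≤ n → X j ω = 0 ∨ X j ω = 1) (ω : Ω) :
    ∀ k, k ≤ n → Real.exp y < stopMart p X y k ω ∨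
      ((∑ j ∈ Finset.Icc 1 k, p j ω * ∏ i ∈ Finset.Icc 1 j, (1 - X i ω)) ≤ y ∧
       stopMart p X y k ω = (∏ i ∈ Finset.Icc 1 k, (1 - X i ω)) *
        Real.exp (∑ j ∈ Finset.Icc 1 k, p j ω * ∏ i ∈ Finset.Icc 1 j, (1 - X i ω)) ∧
       ((∏ i ∈ Finset.Icc 1 k, (1 - X i ω)) = 0 ∨ (∏ i ∈ Finset.Icc 1 k, (1 - X i ω)) = 1)) := by
  intro k
  induction k with
  | zero => intro _; right; simp [stopMart, hy]
  | succ k ih =>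
    intro hk
    rw [stopMart]
    split_ifs with h
    · left; exact h
    · obtain h' | ⟨h1, h2, h3⟩ := ih (by omega)
      · exact absurd h' h
      rw [Finset.sum_Icc_succ_top (by omega), Finset.prod_Icc_succ_top (by omega), h2]
      generalize (∑ j ∈ Finset.Icc 1 k, p j ω * ∏ i ∈ Finset.Icc 1 j, (1 - X i ω)) = Y at *
      generalize (∏ i ∈ Finset.Icc 1 k, (1 - X i ω)) = Z at *
      rcases hX_range (k + 1) ω (by omega) hk with hx | hx
      · rcases h3 with h3 | h3
        · right; simp [hx, h3, h1]
        · subst h3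
          by_cases hc : y < Y + p (k + 1) ω
          · left; simp [hx, ← Real.exp_add, hc]
          · right; simp [hx, ← Real.exp_add, not_lt.mp hc]
      · right; simp [hx, h1]

theorem st_bound {Ω : Type*} (n : ℕ) (p X : ℕ → Ω → ℝ) (y : ℝ)
    (hp_range : ∀ j ω, 1 ≤ j → j ≤ n → p j ω ∈ Set.Icc (0 : ℝ) 1)
    (hX_range : ∀ j ω, 1 ≤ j → j ≤ n → X j ω = 0 ∨ X j ω = 1) (ω : Ω) :
    ∀ k, k ≤ n → 0 ≤ stopMart p X y k ω ∧ stopMart p X y k ω ≤ Real.exp k := by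
  intro k
  induction k with
  | zero => intro _; simp [stopMart]
  | succ k ih =>
    intro hk
    obtain ⟨h0, h1⟩ := ih (by omega)
    have hp := hp_range (k + 1) ω (by omega) hk
    have he : Real.exp k ≤ Real.exp ((k + 1 : ℕ) : ℝ) := by
      apply Real.exp_le_exp.mpr; push_cast; linarith
    rw [stopMart]
    split_ifs with h
    · exact ⟨h0, h1.trans he⟩
    · rcases hX_range (k + 1) ω (by omega) hk with hx | hx
      · rw [hx]
        refine ⟨by simp; positivity, ?_⟩
        push_cast
        rw [Real.exp_add, sub_zero, mul_one]
        exact mul_le_mul h1 (Real.exp_le_exp.mpr hp.2) (by positivity) (by positivity)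
      · rw [hx]; simp; positivity

theorem st_meas {Ω : Type*} {mΩ : MeasurableSpace Ω} (n : ℕ) (F : Filtration ℕ mΩ)
    (p X : ℕ → Ω → ℝ) (y : ℝ)
    (hp_meas : ∀ j, 1 ≤ j → j ≤ n → Measurable[F (j - 1)] (p j))
    (hX_meas : ∀ j, 1 ≤ j → j ≤ n → Measurable[F j] (X j)) :
    ∀ k, k ≤ n → Measurable[F k] (stopMart p X y k) := by
  intro k
  induction k with
  | zero => intro _; exact measurable_const
  | succ k ih =>
    intro hk
    have hM : Measurable[F (k + 1)] (stopMart p X y k) := (ih (by omega)).mono (F.mono (by omega)) le_rfl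
    have hp : Measurable[F (k + 1)] (p (k + 1)) :=
      (hp_meas (k + 1) (by omega) hk).mono (F.mono (by omega)) le_rfl
    have hX := hX_meas (k + 1) (by omega) hk
    have : stopMart p X y (k + 1) = fun ω => if Real.exp y < stopMart p X y k ω then stopMart p X y k ω
      else stopMart p X y k ω * Real.exp (p (k + 1) ω) * (1 - X (k + 1) ω) := by
      funext ω; rw [stopMart]
    rw [this]
    refine Measurable.ite (measurableSet_lt measurable_const hM) hM ?_
    exact (hM.mul (Real.measurable_exp.comp hp)).mul (measurable_const.sub hX)

theorem st_int {Ω : Type*} {mΩ : MeasurableSpace Ω} (μ : Measure Ω)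
    [IsProbabilityMeasure μ] (n : ℕ) (F : Filtration ℕ mΩ) (p X : ℕ → Ω → ℝ) (y : ℝ)
    (hp_meas : ∀ j, 1 ≤ j → j ≤ n → Measurable[F (j - 1)] (p j))
    (hp_range : ∀ j ω, 1 ≤ j → j ≤ n → p j ω ∈ Set.Icc (0 : ℝ) 1)
    (hX_meas : ∀ j, 1 ≤ j → j ≤ n → Measurable[F j] (X j))
    (hX_range : ∀ j ω, 1 ≤ j → j ≤ n → X j ω = 0 ∨ X j ω = 1)
    (hcond : ∀ j, 1 ≤ j → j ≤ n → μ[X j|F (j - 1)] =ᵐ[μ] p j) :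
    ∀ k, k ≤ n → Integrable (stopMart p X y k) μ ∧ ∫ ω, stopMart p X y k ω ∂μ ≤ 1 := by
  have hint : ∀ k, k ≤ n → Integrable (stopMart p X y k) μ := by
    intro k hk
    refine Integrable.of_bound
      ((st_meas n F p X y hp_meas hX_meas k hk).mono (F.le k) le_rfl).aestronglyMeasurable
      (Real.exp k) (Filter.Eventually.of_forall fun ω => ?_)
    have := st_bound n p X y hp_range hX_range ω k hk
    rw [Real.norm_eq_abs, abs_of_nonneg this.1]; exact this.2
  intro k
  induction k with
  | zero => intro hk; exact ⟨hint 0 hk, by simp [stopMart]⟩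
  | succ k ih =>
    intro hk
    refine ⟨hint _ hk, le_trans ?_ (ih (by omega)).2⟩
    have hMk := st_meas n F p X y hp_meas hX_meas k (by omega)
    have hpk : Measurable[F k] (p (k + 1)) := hp_meas (k + 1) (by omega) hk
    have hXk := (hX_meas (k + 1) (by omega) hk).mono (F.le _) le_rfl
    have hc : μ[X (k + 1)|F k] =ᵐ[μ] p (k + 1) := hcond (k + 1) (by omega) hk
    set B : Ω → ℝ := fun ω => if Real.exp y < stopMart p X y k ω then 0
      else stopMart p X y k ω * Real.exp (p (k + 1) ω) with hB
    have hBm : Measurable[F k] B := Measurable.ite (measurableSet_lt measurable_const hMk)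
      measurable_const (hMk.mul (Real.measurable_exp.comp hpk))
    have hBb : ∀ ω, ‖B ω‖ ≤ Real.exp k * Real.exp 1 := by
      intro ω
      have h1 := st_bound n p X y hp_range hX_range ω k (by omega)
      have h2 := (hp_range (k + 1) ω (by omega) hk).2
      simp only [hB]
      split_ifs
      · simp; positivity
      · rw [Real.norm_eq_abs, abs_of_nonneg (mul_nonneg h1.1 (Real.exp_pos _).le)]
        exact mul_le_mul h1.2 (Real.exp_le_exp.mpr h2) (by positivity) (by positivity)
    have hXi : Integrable (X (k + 1)) μ := by
      refine Integrable.of_bound hXk.aestronglyMeasurable 1 (Filter.Eventually.of_forall fun ω => ?_)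
      rcases hX_range (k + 1) ω (by omega) hk with h | h <;> simp [h]
    have hpi : Integrable (p (k + 1)) μ := integrable_condExp.congr hc
    have hBs := (hBm.mono (F.le k) le_rfl).aestronglyMeasurable (μ := μ)
    have hBX : Integrable (B * X (k + 1)) μ :=
      hXi.bdd_mul hBs (Filter.Eventually.of_forall hBb)
    have hBp : Integrable (B * p (k + 1)) μ :=
      hpi.bdd_mul hBs (Filter.Eventually.of_forall hBb)
    have key : ∫ ω, (B * X (k + 1)) ω ∂μ = ∫ ω, (B * p (k + 1)) ω ∂μ := by
      rw [← integral_condExp (F.le k)]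
      refine integral_congr_ae ?_
      filter_upwards [condExp_mul_of_stronglyMeasurable_left hBm.stronglyMeasurable hBX hXi, hc]
        with ω h1 h2
      rw [h1, Pi.mul_apply, h2, Pi.mul_apply]
    have e1 : ∀ ω, stopMart p X y (k + 1) ω + (B * X (k + 1)) ω ≤ stopMart p X y k ω + (B * p (k + 1)) ω := by
      intro ω
      have h1 := st_bound n p X y hp_range hX_range ω k (by omega)
      simp only [stopMart, Pi.mul_apply, hB]
      split_ifs
      · simp
      · have h3 : Real.exp (p (k + 1) ω) * (1 - p (k + 1) ω) ≤ 1 := by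
          have := Real.add_one_le_exp (-p (k + 1) ω)
          calc _ ≤ Real.exp (p (k + 1) ω) * Real.exp (-p (k + 1) ω) :=
                mul_le_mul_of_nonneg_left (by linarith) (Real.exp_pos _).le
            _ = 1 := by rw [← Real.exp_add]; simp
        nlinarith [mul_le_mul_of_nonneg_left h3 h1.1]
    have e2 := integral_mono ((hint _ hk).add hBX) ((hint k (by omega)).add hBp) e1
    simp only [Pi.add_apply] at e2
    rw [integral_add (hint _ hk) hBX, integral_add (hint k (by omega)) hBp, key] at e2
    linarith

/-- The adaptive stopping lemma of Gupta et al.: in an `n`-round process where the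
adversary's heads probability `p j` is predictable (`F_{j−1}`-measurable, in `[0,1]`),
the coin `X j` is `F_j`-measurable with values in `{0,1}` and conditional mean
`E[X j | F_{j−1}] = p j`, `Z_j = ∏_{i≤j} (1 − X_i)` indicates no heads in the first `j`
rounds, and `Y = Σ_j p_j·Z_j`, we have `P[Y > y] ≤ exp(−y)` for every `y`. -/
theorem stmt13 {Ω : Type*} {mΩ : MeasurableSpace Ω} (μ : Measure Ω)
    [IsProbabilityMeasure μ] (n : ℕ) (F : Filtration ℕ mΩ) (p X : ℕ → Ω → ℝ)
    (hp_meas : ∀ j, 1 ≤ j → j ≤ n → Measurable[F (j - 1)] (p j))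
    (hp_range : ∀ j ω, 1 ≤ j → j ≤ n → p j ω ∈ Set.Icc (0 : ℝ) 1)
    (hX_meas : ∀ j, 1 ≤ j → j ≤ n → Measurable[F j] (X j))
    (hX_range : ∀ j ω, 1 ≤ j → j ≤ n → X j ω = 0 ∨ X j ω = 1)
    (hcond : ∀ j, 1 ≤ j → j ≤ n → μ[X j|F (j - 1)] =ᵐ[μ] p j) :
    ∀ y : ℝ,
      μ {ω | y < ∑ j ∈ Finset.Icc 1 n, p j ω * ∏ i ∈ Finset.Icc 1 j, (1 - X i ω)}
        ≤ ENNReal.ofReal (Real.exp (-y)) := by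
  intro y
  rcases lt_or_ge y 0 with hy | hy
  · refine prob_le_one.trans ?_
    rw [← ENNReal.ofReal_one]
    exact ENNReal.ofReal_le_ofReal (Real.one_le_exp (by linarith))
  obtain ⟨hi, hle⟩ := st_int μ n F p X y hp_meas hp_range hX_meas hX_range hcond n le_rfl
  have hsub : {ω | y < ∑ j ∈ Finset.Icc 1 n, p j ω * ∏ i ∈ Finset.Icc 1 j, (1 - X i ω)} ⊆
      {ω | Real.exp y ≤ stopMart p X y n ω} := by
    intro ω hω
    rcases st_invariant n p X y hy hX_range ω n le_rfl with h | h
    · exact h.le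
    · exact absurd hω (not_lt.mpr h.1)
  refine (measure_mono hsub).trans ?_
  have hm := mul_meas_ge_le_integral_of_nonneg (μ := μ) (f := stopMart p X y n)
    (Filter.Eventually.of_forall fun ω => (st_bound n p X y hp_range hX_range ω n le_rfl).1)
    hi (Real.exp y)
  rw [← ENNReal.ofReal_toReal (measure_ne_top μ {ω | Real.exp y ≤ stopMart p X y n ω})]
  apply ENNReal.ofReal_le_ofReal
  rw [Real.exp_neg, ← one_div, le_div_iff₀ (Real.exp_pos y), mul_comm]
  exact hm.trans hle
end
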